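/- arXiv:2208.05752 — 5 statements merged into one kernel-verified Lean document; each statement's English description precedes it below -/
import Mathlib

section
/- For all positive integers n and m, δ^n ≠ a·α^m, where δ = (1+√5)/2, α is the unique real root of x³ − x − 1, and a = (1+α)/(−α²+3α+1). (Equivalently, the quantity Λ = a^{−1} δ^n α^{−m} − 1 never vanishes.) -/
open Polynomial in
theorem aux_irr : Irreducible (X ^ 3 - X ^ 2 + C (6/23) * X - C (1/23) : ℚ[X]) := by
  have hdeg : (X ^ 3 - X ^ 2 + C (6/23) * X - C (1/23) : ℚ[X]).natDegree = 3 := by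
    compute_degree!
  have hne : (X ^ 3 - X ^ 2 + C (6/23) * X - C (1/23) : ℚ[X]) ≠ 0 := by
    intro h
    rw [h] at hdeg
    simp at hdeg
  rw [Polynomial.irreducible_iff_roots_eq_zero_of_degree_le_three (by rw [hdeg]; norm_num)
    (by rw [hdeg])]
  rw [Multiset.eq_zero_iff_forall_notMem]
  intro r hr
  rw [Polynomial.mem_roots hne] at hr
  simp [Polynomial.IsRoot] at hr
  have hq : (r.den : ℚ) ≠ 0 := by exact_mod_cast r.den_ne_zero
  have h1 : 23 * (r.num : ℚ) ^ 3 - 23 * (r.num : ℚ) ^ 2 * r.den + 6 * r.num * (r.den : ℚ) ^ 2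
      - (r.den : ℚ) ^ 3 = 0 := by
    have e : (r.num : ℚ) = r * r.den := (Rat.mul_den_eq_num r).symm
    rw [e]
    linear_combination 23 * (r.den : ℚ) ^ 3 * hr
  have h2 : 23 * r.num ^ 3 - 23 * r.num ^ 2 * (r.den : ℤ) + 6 * r.num * (r.den : ℤ) ^ 2
      - (r.den : ℤ) ^ 3 = 0 := by exact_mod_cast h1
  have h3 : ∀ p q : ZMod 2, 23 * p ^ 3 - 23 * p ^ 2 * q + 6 * p * q ^ 2 - q ^ 3 = 0 →
      p = 0 ∧ q = 0 := by decide
  have h4 := h3 (r.num : ZMod 2) ((r.den : ℤ) : ZMod 2) (by exact_mod_cast congrArg (Int.cast : ℤ → ZMod 2) h2)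
  have h5 := (ZMod.intCast_zmod_eq_zero_iff_dvd _ 2).1 h4.1
  have h6 := (ZMod.intCast_zmod_eq_zero_iff_dvd _ 2).1 h4.2
  have h7 : 2 ∣ r.num.natAbs := by omega
  have h8 : 2 ∣ r.den := by omega
  have := Nat.dvd_gcd h7 h8
  rw [r.reduced] at this
  omega

open Polynomial in
theorem aux_not_int (a : ℝ) (h : 23 * a ^ 3 - 23 * a ^ 2 + 6 * a - 1 = 0) : ¬ IsIntegral ℤ a := by
  intro hi
  have hm : (X ^ 3 - X ^ 2 + C (6/23) * X - C (1/23) : ℚ[X]).Monic := by monicity!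
  have h1 := minpoly.eq_of_irreducible_of_monic (x := a) aux_irr (by
    simp
    linear_combination h / 23) hm
  rw [minpoly.isIntegrallyClosed_eq_field_fractions' ℚ hi] at h1
  have h2 := congrArg (fun p => p.coeff 0) h1
  simp at h2
  have h3 : (((minpoly ℤ a).coeff 0 * 23 : ℤ) : ℚ) = (-1 : ℤ) := by
    push_cast
    linarith
  have h4 : (minpoly ℤ a).coeff 0 * 23 = -1 := by exact_mod_cast h3
  omega

theorem Lambda_ne_zero (α : ℝ) (hα : α ^ 3 = α + 1)
    (a : ℝ) (ha : a = (1 + α) / (-α ^ 2 + 3 * α + 1))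
    (n m : ℕ) (hn : 0 < n) (hm : 0 < m) :
    ((1 + Real.sqrt 5) / 2) ^ n ≠ a * α ^ m := by
  intro h
  have hα' : IsIntegral ℤ α := ⟨Polynomial.X ^ 3 - Polynomial.X - 1, by monicity!, by
    simp; linarith⟩
  have hδ : IsIntegral ℤ ((1 + Real.sqrt 5) / 2) :=
    ⟨Polynomial.X ^ 2 - Polynomial.X - 1, by monicity!, by
      have := Real.sq_sqrt (show (0:ℝ) ≤ 5 by norm_num)
      simp only [Polynomial.eval₂_sub, Polynomial.eval₂_pow, Polynomial.eval₂_X,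
        Polynomial.eval₂_one]
      linear_combination this / 4⟩
  have h1 : a = ((1 + Real.sqrt 5) / 2) ^ n * (α ^ 2 - 1) ^ m := by
    rw [h, mul_assoc, ← mul_pow, show α * (α ^ 2 - 1) = 1 by linear_combination hα]
    simp
  by_cases hd : -α ^ 2 + 3 * α + 1 = 0
  · rw [hd, div_zero] at ha
    rw [ha, zero_mul] at h
    have : 0 < ((1 + Real.sqrt 5) / 2) ^ n := by positivity
    linarith
  · refine aux_not_int a ?_ ?_
    · have hd3 := pow_ne_zero 3 hd
      have e : 1 + α = a * (-α ^ 2 + 3 * α + 1) := by rw [ha, div_mul_cancel₀ _ hd]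
      have key : 23 * (1 + α) ^ 3 - 23 * (1 + α) ^ 2 * (-α ^ 2 + 3 * α + 1)
          + 6 * (1 + α) * (-α ^ 2 + 3 * α + 1) ^ 2 - (-α ^ 2 + 3 * α + 1) ^ 3 = 0 := by
        linear_combination (α ^ 3 - 3 * α ^ 2 + 18 * α - 5) * hα
      rw [e] at key
      apply mul_left_cancel₀ hd3
      linear_combination key
    · rw [h1]
      exact (hδ.pow n).mul (((hα'.pow 2).sub isIntegral_one).pow m)
end

section
/- For all integers n > n₁ ≥ 1 with n ≥ 4 and every positive integer m, δ^n − δ^{n₁} ≠ a·α^m, where δ = (1+√5)/2, α is the unique real root of x³ − x − 1, and a = (1+α)/(−α²+3α+1). (Equivalently, the quantity Λ₁ = ((δ^{n−n₁}−1)/a)·δ^{n₁}·α^{−m} − 1 never vanishes.) -/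
open Polynomial IntermediateField in
theorem Lambda_aux (α : ℝ) (hα : α ^ 3 = α + 1) (x : ℝ) (hx : x ∈ ℚ⟮α⟯) (A B : ℚ)
    (hq : x ^ 2 + A * x + B = 0) : ∃ q : ℚ, (q : ℝ) = x := by
  have hirr : Irreducible (X ^ 3 - X - 1 : ℚ[X]) :=
    X_pow_sub_X_sub_one_irreducible_rat (by norm_num)
  have hdeg : (X ^ 3 - X - 1 : ℚ[X]).natDegree = 3 := by compute_degree!
  have hmon : (X ^ 3 - X - 1 : ℚ[X]).Monic := by monicity!
  have hmp : minpoly ℚ α = X ^ 3 - X - 1 :=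
    (minpoly.eq_of_irreducible_of_monic hirr (by simp; linarith) hmon).symm
  have hint : IsIntegral ℚ α := ⟨X ^ 3 - X - 1, hmon, by simp; linarith⟩
  have hfr : Module.finrank ℚ ℚ⟮α⟯ = 3 := by
    rw [IntermediateField.adjoin.finrank hint, hmp, hdeg]
  haveI : FiniteDimensional ℚ ℚ⟮α⟯ := IntermediateField.adjoin.finiteDimensional hint
  have h1 : (minpoly ℚ (⟨x, hx⟩ : ℚ⟮α⟯)).natDegree ∣ 3 := by
    rw [← hfr]; exact minpoly.degree_dvd (IsIntegral.of_finite ℚ _)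
  have h0 : minpoly ℚ (⟨x, hx⟩ : ℚ⟮α⟯) = minpoly ℚ x := by
    exact (minpoly.algebraMap_eq (algebraMap ℚ⟮α⟯ ℝ).injective (⟨x, hx⟩ : ℚ⟮α⟯)).symm
  rw [h0] at h1
  have hd2 : (X ^ 2 + C A * X + C B : ℚ[X]).natDegree = 2 := by compute_degree!
  have hm2 : (X ^ 2 + C A * X + C B : ℚ[X]).Monic := by monicity!
  have h2 : (minpoly ℚ x).natDegree ≤ 2 := by
    rw [← hd2]
    exact natDegree_le_of_dvd (minpoly.dvd ℚ x (by simpa using hq)) hm2.ne_zero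
  have h3 : (minpoly ℚ x).natDegree = 1 := by
    generalize (minpoly ℚ x).natDegree = d at *
    interval_cases d <;> omega
  obtain ⟨q, hq⟩ := minpoly.natDegree_eq_one_iff.1 h3
  exact ⟨q, by simpa using hq⟩

theorem Lambda₁_ne_zero (α : ℝ) (hα : α ^ 3 = α + 1)
    (a : ℝ) (ha : a = (1 + α) / (-α ^ 2 + 3 * α + 1))
    (n n₁ m : ℕ) (hn₁ : 1 ≤ n₁) (hnn₁ : n₁ < n) (hn : 4 ≤ n) (hm : 0 < m) :
    ((1 + Real.sqrt 5) / 2) ^ n - ((1 + Real.sqrt 5) / 2) ^ n₁ ≠ a * α ^ m := by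
  intro h
  have hmem : a * α ^ m ∈ IntermediateField.adjoin ℚ {α} := by
    have hA : α ∈ IntermediateField.adjoin ℚ {α} :=
      IntermediateField.mem_adjoin_simple_self ℚ α
    have h3 : (3 : ℝ) ∈ IntermediateField.adjoin ℚ {α} := ofNat_mem _ 3
    rw [ha]
    exact mul_mem (div_mem (add_mem (one_mem _) hA)
      (add_mem (add_mem (neg_mem (pow_mem hA 2)) (mul_mem h3 hA)) (one_mem _))) (pow_mem hA m)
  rw [← h] at hmem
  change Real.goldenRatio ^ n - Real.goldenRatio ^ n₁ ∈ _ at hmem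
  obtain ⟨k, rfl⟩ : ∃ k, n = k + 1 := ⟨n - 1, by omega⟩
  obtain ⟨l, rfl⟩ : ∃ l, n₁ = l + 1 := ⟨n₁ - 1, by omega⟩
  have hf : Nat.fib (l + 1) < Nat.fib (k + 1) :=
    (Nat.fib_mono (by omega : l + 1 ≤ k)).trans_lt (Nat.fib_lt_fib_succ (by omega))
  rw [← Real.goldenRatio_mul_fib_succ_add_fib, ← Real.goldenRatio_mul_fib_succ_add_fib] at hmem
  set u : ℤ := (Nat.fib (k + 1) : ℤ) - Nat.fib (l + 1) with hu
  set v : ℤ := (Nat.fib k : ℤ) - Nat.fib l with hv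
  have hu0 : u ≠ 0 := by omega
  have e : Real.goldenRatio * (Nat.fib (k + 1)) + Nat.fib k -
      (Real.goldenRatio * (Nat.fib (l + 1)) + Nat.fib l) = Real.goldenRatio * u + v := by
    rw [hu, hv]; push_cast; ring
  rw [e] at hmem
  obtain ⟨q, hq⟩ := Lambda_aux α hα _ hmem (-2 * v - u) (v ^ 2 + u * v - u ^ 2) (by
    push_cast
    linear_combination (u : ℝ) ^ 2 * Real.goldenRatio_sq)
  have hirr : Irrational (Real.goldenRatio * u + v) :=
    (Real.goldenRatio_irrational.mul_intCast hu0).add_intCast v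
  exact hirr ⟨q, hq⟩
end

section
/- For all positive integers n and all integers m > m₁ ≥ 1, δ^{2n} ≠ α^{2m₁}·a²·(α^{m−m₁} − 1)², where δ = (1+√5)/2, α is the unique real root of x³ − x − 1, and a = (1+α)/(−α²+3α+1). (Equivalently, the quantity Λ₂ = (a(α^{m−m₁}−1))^{−1}·δ^n·α^{−m₁} − 1 never vanishes.) -/
theorem delta_pow_form (k : ℕ) : ∃ A B : ℚ, 0 < A ∧ 0 < B ∧
    ((1 + Real.sqrt 5) / 2) ^ (k + 1) = (A : ℝ) + B * Real.sqrt 5 := by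
  induction k with
  | zero => exact ⟨1/2, 1/2, by norm_num, by norm_num, by push_cast; ring⟩
  | succ k ih =>
    obtain ⟨A, B, hA, hB, h⟩ := ih
    refine ⟨(A + 5 * B) / 2, (A + B) / 2, by positivity, by positivity, ?_⟩
    rw [pow_succ, h]
    have h5 : Real.sqrt 5 * Real.sqrt 5 = 5 := Real.mul_self_sqrt (by norm_num)
    push_cast
    linear_combination (B : ℝ) / 2 * h5

open Polynomial in
theorem sqrt_five_not_mem (α : ℝ) (hα : α ^ 3 = α + 1) :
    Real.sqrt 5 ∉ IntermediateField.adjoin ℚ ({α} : Set ℝ) := by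
  intro hmem
  have hirr : Irreducible (X ^ 3 - X - 1 : ℚ[X]) :=
    X_pow_sub_X_sub_one_irreducible_rat (by norm_num)
  have hmon : (X ^ 3 - X - 1 : ℚ[X]).Monic := by monicity!
  have hdeg : (X ^ 3 - X - 1 : ℚ[X]).natDegree = 3 := by compute_degree!
  have hmin : minpoly ℚ α = X ^ 3 - X - 1 :=
    (minpoly.eq_of_irreducible_of_monic hirr (by simp [hα]) hmon).symm
  have hint : IsIntegral ℚ α := ⟨_, hmon, by simp [hα]⟩
  have hfin : Module.finrank ℚ (IntermediateField.adjoin ℚ ({α} : Set ℝ)) = 3 := by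
    rw [IntermediateField.adjoin.finrank hint, hmin, hdeg]
  haveI : FiniteDimensional ℚ (IntermediateField.adjoin ℚ ({α} : Set ℝ)) :=
    IntermediateField.adjoin.finiteDimensional hint
  set s : IntermediateField.adjoin ℚ ({α} : Set ℝ) := ⟨Real.sqrt 5, hmem⟩ with hs
  have hs2 : s ^ 2 = 5 := by
    apply Subtype.ext
    change Real.sqrt 5 ^ 2 = 5
    exact Real.sq_sqrt (by norm_num)
  have hsi : IsIntegral ℚ s := IsIntegral.of_finite ℚ s
  have hdvd : (minpoly ℚ s).natDegree ∣ 3 := hfin ▸ minpoly.degree_dvd hsi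
  have hd2 : (X ^ 2 - C 5 : ℚ[X]).natDegree = 2 := by compute_degree!
  have hle : (minpoly ℚ s).natDegree ≤ 2 := by
    rw [← hd2]
    apply natDegree_le_of_dvd
    · apply minpoly.dvd
      simp [hs2]
    · intro h; rw [h] at hd2; simp at hd2
  have h1 : (minpoly ℚ s).natDegree = 1 := by
    rcases (Nat.dvd_prime Nat.prime_three).1 hdvd with h | h <;> omega
  obtain ⟨q, hq⟩ := minpoly.natDegree_eq_one_iff.1 h1
  have hirr5 : Irrational (Real.sqrt 5) := by
    have := Nat.Prime.irrational_sqrt (p := 5) (by norm_num)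
    simpa using this
  apply hirr5
  exact ⟨q, by simpa [hs] using congrArg Subtype.val hq⟩

theorem Lambda₂_ne_zero (α : ℝ) (hα : α ^ 3 = α + 1)
    (a : ℝ) (ha : a = (1 + α) / (-α ^ 2 + 3 * α + 1))
    (n m m₁ : ℕ) (hn : 0 < n) (hm₁ : 1 ≤ m₁) (hmm₁ : m₁ < m) :
    ((1 + Real.sqrt 5) / 2) ^ (2 * n) ≠ α ^ (2 * m₁) * a ^ 2 * (α ^ (m - m₁) - 1) ^ 2 := by
  intro h
  apply sqrt_five_not_mem α hα
  obtain ⟨A, B, hA, hB, hAB⟩ := delta_pow_form (2 * n - 1)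
  rw [show 2 * n - 1 + 1 = 2 * n by omega, h] at hAB
  set K := IntermediateField.adjoin ℚ ({α} : Set ℝ)
  let x : K := ⟨α, IntermediateField.mem_adjoin_simple_self ℚ α⟩
  let y : K := (x ^ (2 * m₁) * ((1 + x) / (-x ^ 2 + 3 * x + 1)) ^ 2 * (x ^ (m - m₁) - 1) ^ 2
    - (A : K)) / (B : K)
  have hy : (y : ℝ) = Real.sqrt 5 := by
    have hB' : (B : ℝ) ≠ 0 := by exact_mod_cast hB.ne'
    have : (y : ℝ) = (α ^ (2 * m₁) * ((1 + α) / (-α ^ 2 + 3 * α + 1)) ^ 2 *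
      (α ^ (m - m₁) - 1) ^ 2 - (A : ℝ)) / (B : ℝ) := by
      simp only [y, x]
      push_cast
      rfl
    rw [this, ← ha, hAB]
    field_simp
    ring
  rw [← hy]
  exact y.2
end

section
/- Suppose n > n₁ ≥ 1 and m > m₁ ≥ 1 are integers with L_n − L_{n₁} = 𝒫_m − 𝒫_{m₁}. Then |δ^n − a·α^m| < 4.76·max{δ^{n₁}, α^{m₁}}, where δ = (1+√5)/2, α is the unique real root of x³ − x − 1, and a = (1+α)/(−α²+3α+1). -/
/-- The Padovan sequence: 𝒫₀ = 𝒫₁ = 𝒫₂ = 1, 𝒫_{k+3} = 𝒫_{k+1} + 𝒫_k. -/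
def padovan : ℕ → ℕ
  | 0 => 1
  | 1 => 1
  | 2 => 1
  | k + 3 => padovan (k + 1) + padovan k

/-- The Lucas sequence: L₀ = 2, L₁ = 1, L_{k+2} = L_{k+1} + L_k. -/
def lucasSeq : ℕ → ℕ
  | 0 => 2
  | 1 => 1
  | k + 2 => lucasSeq (k + 1) + lucasSeq k

lemma lucas_binet (n : ℕ) : (lucasSeq n : ℝ) =
    ((1 + Real.sqrt 5) / 2) ^ n + ((1 - Real.sqrt 5) / 2) ^ n := by
  have h5 : Real.sqrt 5 ^ 2 = 5 := Real.sq_sqrt (by norm_num)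
  have key : ∀ k : ℕ, (lucasSeq k : ℝ) =
      ((1 + Real.sqrt 5) / 2) ^ k + ((1 - Real.sqrt 5) / 2) ^ k ∧ (lucasSeq (k + 1) : ℝ) =
      ((1 + Real.sqrt 5) / 2) ^ (k + 1) + ((1 - Real.sqrt 5) / 2) ^ (k + 1) := by
    intro k
    induction k with
    | zero => constructor <;> norm_num [lucasSeq]
    | succ k ih =>
      obtain ⟨h1, h2⟩ := ih
      refine ⟨h2, ?_⟩
      have h : lucasSeq (k + 1 + 1) = lucasSeq (k + 1) + lucasSeq k := rfl
      rw [h]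
      push_cast
      rw [h1, h2]
      have e1 : ((1 + Real.sqrt 5) / 2) ^ 2 = (1 + Real.sqrt 5) / 2 + 1 := by linarith
      have e2 : ((1 - Real.sqrt 5) / 2) ^ 2 = (1 - Real.sqrt 5) / 2 + 1 := by linarith
      rw [pow_succ _ (k + 1), pow_succ _ (k + 1), pow_succ _ k, pow_succ _ k]
      linear_combination (-((1 + Real.sqrt 5) / 2) ^ k) * e1 - ((1 - Real.sqrt 5) / 2) ^ k * e2
  exact (key n).1

lemma padovan_err (α : ℝ) (hα : α ^ 3 = α + 1) (h1 : 1.32 < α) (h2 : α < 1.33)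
    (a : ℝ) (ha : a * (-α ^ 2 + 3 * α + 1) = 1 + α) (k : ℕ) :
    |(padovan k : ℝ) - a * α ^ k| ≤ 1 := by
  have ha1 : 0.7 < a := by nlinarith
  have ha2 : a < 0.74 := by nlinarith
  set e : ℕ → ℝ := fun k => (padovan k : ℝ) - a * α ^ k with he
  have hrec : ∀ k, e (k + 3) = e (k + 1) + e k := by
    intro k
    have h : padovan (k + 3) = padovan (k + 1) + padovan k := rfl
    simp only [he, h]
    push_cast
    linear_combination (-a * α ^ k) * hα
  have hquad : ∀ k, e (k + 2) = -α * e (k + 1) - (α ^ 2 - 1) * e k := by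
    intro k
    induction k with
    | zero =>
      simp only [he]
      norm_num [padovan]
      linear_combination (-α) * ha - a * hα
    | succ k ih =>
      have := hrec k
      linear_combination this + α * ih + (- e k) * hα
  have hQ : ∀ k, e (k + 1) ^ 2 + α * e (k + 1) * e k + (α ^ 2 - 1) * e k ^ 2 ≤ 0.3 := by
    intro k
    induction k with
    | zero =>
      have e0 : e 0 = 1 - a := by simp [he, padovan]
      have e1 : e 1 = 1 - a * α := by simp [he, padovan]
      rw [e0, zero_add, e1]
      have b1 : 1 - a * α ≤ 0.1 := by nlinarith
      have b2 : -0.1 ≤ 1 - a * α := by nlinarith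
      have c1 : (1 - a * α) ^ 2 ≤ 0.01 := by nlinarith
      have c2 : (1 - a) ^ 2 ≤ 0.09 := by nlinarith
      have c3 : α * (1 - a) ≤ 0.4 := by nlinarith
      have c4 : 0 ≤ α * (1 - a) := by nlinarith
      have c5 : α ^ 2 - 1 ≤ 0.77 := by nlinarith
      nlinarith [sq_nonneg (1 - a)]
    | succ k ih =>
      have hq := hquad k
      have : e (k + 1 + 1) ^ 2 + α * e (k + 1 + 1) * e (k + 1) + (α ^ 2 - 1) * e (k + 1) ^ 2
          = (α ^ 2 - 1) *
            (e (k + 1) ^ 2 + α * e (k + 1) * e k + (α ^ 2 - 1) * e k ^ 2) := by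
        rw [show k + 1 + 1 = k + 2 from rfl, hq]; ring
      rw [this]
      have c5 : α ^ 2 - 1 ≤ 1 := by nlinarith
      have c6 : 0 ≤ α ^ 2 - 1 := by nlinarith
      nlinarith
  have hk := hQ k
  have h3 : 0.3 ≤ α ^ 2 - 1 - α ^ 2 / 4 := by nlinarith
  have h4 : e k ^ 2 ≤ 1 := by
    nlinarith [sq_nonneg (e (k + 1) + α / 2 * e k), sq_nonneg (e k)]
  exact abs_le_one_iff_mul_self_le_one.mpr (by nlinarith)

theorem abs_delta_pow_sub_a_alpha_pow (α : ℝ) (hα : α ^ 3 = α + 1)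
    (a : ℝ) (ha : a = (1 + α) / (-α ^ 2 + 3 * α + 1))
    (n n₁ m m₁ : ℕ) (hn₁ : 1 ≤ n₁) (hnn₁ : n₁ < n) (hm₁ : 1 ≤ m₁) (hmm₁ : m₁ < m)
    (heq : (lucasSeq n : ℤ) - (lucasSeq n₁ : ℤ) = (padovan m : ℤ) - (padovan m₁ : ℤ)) :
    |((1 + Real.sqrt 5) / 2) ^ n - a * α ^ m| <
      4.76 * max (((1 + Real.sqrt 5) / 2) ^ n₁) (α ^ m₁) := by
  have h1 : 1.32 < α := by
    by_contra h
    push Not at h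
    nlinarith [sq_nonneg (α + 0.66), sq_nonneg α, sq_nonneg (α + 1)]
  have h2 : α < 1.33 := by
    by_contra h
    push Not at h
    nlinarith [sq_nonneg (α + 0.66), sq_nonneg α, mul_nonneg (sub_nonneg.2 h) (sub_nonneg.2 h)]
  have hd : 0 < -α ^ 2 + 3 * α + 1 := by nlinarith
  have ha' : a * (-α ^ 2 + 3 * α + 1) = 1 + α := by
    rw [ha, div_mul_cancel₀ _ hd.ne']
  have ha1 : 0 < a := by nlinarith
  have ha2 : a < 1 := by nlinarith
  have E1 := abs_le.1 (padovan_err α hα h1 h2 a ha' m)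
  have E2 := abs_le.1 (padovan_err α hα h1 h2 a ha' m₁)
  have s1 : 2.23 < Real.sqrt 5 := Real.lt_sqrt_of_sq_lt (by norm_num)
  have s2 : Real.sqrt 5 < 2.24 := (Real.sqrt_lt' (by norm_num)).2 (by norm_num)
  have hL1 := lucas_binet n
  have hL2 := lucas_binet n₁
  have heq' : (lucasSeq n : ℝ) - lucasSeq n₁ = padovan m - padovan m₁ := by exact_mod_cast heq
  have C : ∀ k, 1 ≤ k → |((1 - Real.sqrt 5) / 2) ^ k| ≤ 0.62 := by
    intro k hk
    rw [abs_pow]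
    have hb : |(1 - Real.sqrt 5) / 2| ≤ 0.62 := by
      rw [abs_le]; constructor <;> linarith
    calc _ ≤ |(1 - Real.sqrt 5) / 2| ^ 1 :=
          pow_le_pow_of_le_one (abs_nonneg _) (by linarith) hk
      _ ≤ 0.62 := by simpa using hb
  have C1 := abs_le.1 (C n (by omega))
  have C2 := abs_le.1 (C n₁ hn₁)
  have hδ : 1 ≤ ((1 + Real.sqrt 5) / 2) ^ n₁ := one_le_pow₀ (by linarith)
  have hαm : 0 < α ^ m₁ := by positivity
  have m1 := le_max_left (((1 + Real.sqrt 5) / 2) ^ n₁) (α ^ m₁)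
  have m2 := le_max_right (((1 + Real.sqrt 5) / 2) ^ n₁) (α ^ m₁)
  have p1 : 0 < a * α ^ m₁ := by positivity
  have p2 : a * α ^ m₁ ≤ α ^ m₁ := by nlinarith
  rw [abs_lt]
  constructor <;> linarith
end

section
/- Suppose n > n₁ ≥ 1 and m > m₁ ≥ 1 are integers with n ≥ 300, m ≥ 9, and L_n − L_{n₁} = 𝒫_m − 𝒫_{m₁}. Then |a^{−1}·δ^n·α^{−m} − 1| < max{δ^{n₁−n+7}, α^{m₁−m+7}}, where δ = (1+√5)/2, α is the unique real root of x³ − x − 1, and a = (1+α)/(−α²+3α+1). -/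
lemma lucas_pos (k : ℕ) : 1 ≤ lucasSeq k := by
  induction k using Nat.strong_induction_on with
  | _ k ih =>
    match k with
    | 0 => simp [lucasSeq]
    | 1 => simp [lucasSeq]
    | k + 2 =>
      have := ih k (by omega)
      simp only [lucasSeq]; omega

lemma padovan_pos (k : ℕ) : 1 ≤ padovan k := by
  induction k using Nat.strong_induction_on with
  | _ k ih =>
    match k with
    | 0 => simp [padovan]
    | 1 => simp [padovan]
    | 2 => simp [padovan]
    | k + 3 =>
      have := ih k (by omega)
      simp only [padovan]; omega

lemma lucas_mono : Monotone (fun k => lucasSeq (k + 1)) := by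
  apply monotone_nat_of_le_succ
  intro k
  show lucasSeq (k + 1) ≤ lucasSeq (k + 2)
  simp only [lucasSeq]; omega

lemma lucas_binet_s14 (d : ℝ) (hd : d ^ 2 = d + 1) (k : ℕ) :
    (lucasSeq k : ℝ) = d ^ k + (1 - d) ^ k := by
  induction k using Nat.strong_induction_on with
  | _ k ih =>
    match k with
    | 0 => norm_num [lucasSeq]
    | 1 => simp [lucasSeq]
    | k + 2 =>
      have h0 := ih k (by omega)
      have h1 := ih (k + 1) (by omega)
      simp only [lucasSeq]; push_cast
      rw [h0, h1]
      linear_combination (-d ^ k - (1 - d) ^ k) * hd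

lemma lucas_upper (d : ℝ) (hd1 : 1 ≤ d) (hd : d ^ 2 = d + 1) (k : ℕ) :
    (lucasSeq k : ℝ) ≤ 2 * d ^ k := by
  induction k using Nat.strong_induction_on with
  | _ k ih =>
    match k with
    | 0 => norm_num [lucasSeq]
    | 1 => simp [lucasSeq]; linarith
    | k + 2 =>
      have h0 := ih k (by omega)
      have h1 := ih (k + 1) (by omega)
      simp only [lucasSeq]; push_cast
      have : d ^ (k + 2) = d ^ (k + 1) + d ^ k := by linear_combination d ^ k * hd
      linarith

lemma lucas_lower (d : ℝ) (hd1 : 1 ≤ d) (hd : d ^ 2 = d + 1) (k : ℕ) :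
    d ^ k ≤ (lucasSeq (k + 1) : ℝ) := by
  induction k using Nat.strong_induction_on with
  | _ k ih =>
    match k with
    | 0 => norm_num [lucasSeq]
    | 1 => norm_num [lucasSeq]; nlinarith
    | k + 2 =>
      have h0 := ih k (by omega)
      have h1 := ih (k + 1) (by omega)
      have e : lucasSeq (k + 2 + 1) = lucasSeq (k + 1 + 1) + lucasSeq (k + 1) := by
        simp only [lucasSeq]
      rw [e]; push_cast
      have : d ^ (k + 2) = d ^ (k + 1) + d ^ k := by linear_combination d ^ k * hd
      linarith

lemma padovan_upper (x : ℝ) (hx1 : 1 ≤ x) (hx : x ^ 3 = x + 1) (k : ℕ) :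
    (padovan k : ℝ) ≤ x ^ k := by
  induction k using Nat.strong_induction_on with
  | _ k ih =>
    match k with
    | 0 => simp [padovan]
    | 1 => simp [padovan]; linarith
    | 2 => norm_num [padovan]; rw [abs_of_nonneg (by linarith)]; exact hx1
    | k + 3 =>
      have h0 := ih k (by omega)
      have h1 := ih (k + 1) (by omega)
      simp only [padovan]; push_cast
      have : x ^ (k + 3) = x ^ (k + 1) + x ^ k := by linear_combination x ^ k * hx
      linarith

lemma padovan_rec2 (x a : ℝ) (hx : x ^ 3 = x + 1)
    (h0 : a * (3 * x - x ^ 2 + 1) = 1 + x) (k : ℕ) :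
    ((padovan (k + 2) : ℝ) - a * x ^ (k + 2)) + x * ((padovan (k + 1) : ℝ) - a * x ^ (k + 1))
      + (x ^ 2 - 1) * ((padovan k : ℝ) - a * x ^ k) = 0 := by
  induction k with
  | zero =>
    simp [padovan]
    linear_combination (-x) * h0 - a * hx
  | succ k ih =>
    have e : padovan (k + 1 + 2) = padovan (k + 1) + padovan k := by simp only [padovan]
    rw [e]; push_cast
    rw [show k + 1 + 1 = k + 2 from rfl]
    linear_combination x * ih - ((padovan k : ℝ)) * hx

lemma padovan_err_s14 (x a : ℝ) (hx : x ^ 3 = x + 1) (hl : 1.32 < x) (hu : x < 1.33)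
    (al : 0.7 < a) (au : a < 0.75)
    (h0 : a * (3 * x - x ^ 2 + 1) = 1 + x) (k : ℕ) :
    |(padovan k : ℝ) - a * x ^ k| ≤ 1 := by
  have hb : 0.74 < x ^ 2 - 1 ∧ x ^ 2 - 1 < 0.77 := by constructor <;> nlinarith
  have key : ∀ k : ℕ, ((padovan (k + 1) : ℝ) - a * x ^ (k + 1)) ^ 2
      + x * ((padovan (k + 1) : ℝ) - a * x ^ (k + 1)) * ((padovan k : ℝ) - a * x ^ k)
      + (x ^ 2 - 1) * ((padovan k : ℝ) - a * x ^ k) ^ 2 ≤ 0.29 := by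
    intro k
    induction k with
    | zero =>
      simp [padovan]
      have h1 : 0.92 < a * x := by nlinarith
      have h2 : a * x < 1 := by nlinarith
      have h3 : (1 - a * x) ^ 2 ≤ 0.0064 := by nlinarith
      have h4 : x * (1 - a * x) * (1 - a) ≤ 1.33 * 0.08 * 0.3 := by
        gcongr <;> linarith
      have h5 : (x ^ 2 - 1) * (1 - a) ^ 2 ≤ 0.77 * 0.3 ^ 2 := by
        gcongr <;> linarith
      norm_num at h3 h4 h5 ⊢
      linarith
    | succ k ih =>
      have r := padovan_rec2 x a hx h0 k
      rw [show k + 1 + 1 = k + 2 from rfl]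
      generalize (padovan (k + 2) : ℝ) - a * x ^ (k + 2) = u at *
      generalize (padovan (k + 1) : ℝ) - a * x ^ (k + 1) = v at *
      generalize (padovan k : ℝ) - a * x ^ k = w at *
      have hu' : u = - x * v - (x ^ 2 - 1) * w := by linarith
      have : u ^ 2 + x * u * v + (x ^ 2 - 1) * v ^ 2
        = (x ^ 2 - 1) * (v ^ 2 + x * v * w + (x ^ 2 - 1) * w ^ 2) := by
        rw [hu']; ring
      rw [this]
      nlinarith
  have q := key k
  rw [abs_le_one_iff_mul_self_le_one]
  generalize (padovan (k + 1) : ℝ) - a * x ^ (k + 1) = v at *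
  generalize (padovan k : ℝ) - a * x ^ k = w at *
  have h1 : (x ^ 2 - 1 - x ^ 2 / 4) * w ^ 2 ≤ 0.29 := by nlinarith [sq_nonneg (v + x * w / 2)]
  have h2 : 0.29 ≤ x ^ 2 - 1 - x ^ 2 / 4 := by nlinarith
  nlinarith [sq_nonneg w]

set_option maxHeartbeats 1000000 in
theorem Lambda_bound (α : ℝ) (hα : α ^ 3 = α + 1)
    (a : ℝ) (ha : a = (1 + α) / (-α ^ 2 + 3 * α + 1))
    (n n₁ m m₁ : ℕ) (hn₁ : 1 ≤ n₁) (hnn₁ : n₁ < n) (hm₁ : 1 ≤ m₁) (hmm₁ : m₁ < m)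
    (hn : 300 ≤ n) (hm : 9 ≤ m)
    (heq : (lucasSeq n : ℤ) - (lucasSeq n₁ : ℤ) = (padovan m : ℤ) - (padovan m₁ : ℤ)) :
    |a⁻¹ * ((1 + Real.sqrt 5) / 2) ^ n * α ^ (-(m : ℤ)) - 1| <
      max (((1 + Real.sqrt 5) / 2) ^ ((n₁ : ℤ) - n + 7)) (α ^ ((m₁ : ℤ) - m + 7)) := by
  have hs : Real.sqrt 5 ^ 2 = 5 := Real.sq_sqrt (by norm_num)
  have hs0 : 0 ≤ Real.sqrt 5 := Real.sqrt_nonneg 5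
  have hd : ((1 + Real.sqrt 5) / 2) ^ 2 = (1 + Real.sqrt 5) / 2 + 1 := by nlinarith
  have hdl : 1.6 < (1 + Real.sqrt 5) / 2 := by nlinarith
  have hdu : (1 + Real.sqrt 5) / 2 < 1.7 := by nlinarith
  generalize (1 + Real.sqrt 5) / 2 = d at *
  have hpos : 1 < α := by
    by_contra h
    push Not at h
    nlinarith [sq_nonneg (α + 1), sq_nonneg α, sq_nonneg (α - 1), mul_nonneg (sub_nonneg.2 h) (sq_nonneg (2*α + 1))]
  have hl : 1.32 < α := by
    by_contra h
    push Not at h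
    nlinarith [mul_nonneg (sub_nonneg.2 h) (sq_nonneg α)]
  have hu : α < 1.33 := by
    by_contra h
    push Not at h
    nlinarith [mul_nonneg (sub_nonneg.2 h) (sq_nonneg α)]
  have hden : 3.19 < -α ^ 2 + 3 * α + 1 ∧ -α ^ 2 + 3 * α + 1 < 3.25 := by
    constructor <;> nlinarith
  have h0 : a * (3 * α - α ^ 2 + 1) = 1 + α := by
    rw [ha, show 3 * α - α ^ 2 + 1 = -α ^ 2 + 3 * α + 1 by ring]
    exact div_mul_cancel₀ _ (by linarith)
  have al : 0.7 < a := by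
    rw [ha, lt_div_iff₀ (by linarith)]; linarith
  have au : a < 0.75 := by
    rw [ha, div_lt_iff₀ (by linarith)]; linarith
  have hα0 : 0 < α := by linarith
  have hd0 : 0 < d := by linarith
  have ha0 : 0 < a := by linarith
  set D := a * α ^ m with hD
  have hDpos : 0 < D := by positivity
  have herr := abs_le.1 (padovan_err_s14 α a hα hl hu al au h0 m)
  rw [← hD] at herr
  have hbin := lucas_binet_s14 d hd n
  have hψ : |(1 - d) ^ n| ≤ 1 := by
    rw [abs_pow]
    apply pow_le_one₀ (abs_nonneg _)
    rw [abs_le]; constructor <;> linarith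
  have hψ' := abs_le.1 hψ
  have heqR : (lucasSeq n : ℝ) - lucasSeq n₁ = padovan m - padovan m₁ := by exact_mod_cast heq
  have hP1 : (1 : ℝ) ≤ padovan m₁ := by exact_mod_cast padovan_pos m₁
  have hPu := padovan_upper α (by linarith) hα m₁
  have hLu := lucas_upper d (by linarith) hd n₁
  have hL1 : (1 : ℝ) ≤ lucasSeq n₁ := by exact_mod_cast lucas_pos n₁
  obtain ⟨j, rfl⟩ : ∃ j, n = j + 3 := ⟨n - 3, by omega⟩
  clear hn hm heq
  have hLl := lucas_lower d (by linarith) hd j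
  have hmono : (lucasSeq n₁ : ℝ) ≤ lucasSeq (j + 2) := by
    have := lucas_mono (show n₁ - 1 ≤ j + 1 by omega)
    simp only [Nat.sub_add_cancel hn₁] at this
    exact_mod_cast this
  have hrec : (lucasSeq (j + 3) : ℝ) = lucasSeq (j + 2) + lucasSeq (j + 1) := by
    have : lucasSeq (j + 3) = lucasSeq (j + 2) + lucasSeq (j + 1) := by simp only [lucasSeq]
    exact_mod_cast this
  have hDl : d ^ j ≤ D := by linarith
  set M := max (d ^ ((n₁ : ℤ) - (j + 3 : ℕ) + 7)) (α ^ ((m₁ : ℤ) - m + 7)) with hM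
  have hM1 : d ^ (n₁ + 4) ≤ D * M := by
    have e : d ^ (n₁ + 4) = d ^ j * d ^ ((n₁ : ℤ) - (j + 3 : ℕ) + 7) := by
      rw [← zpow_natCast, ← zpow_natCast, ← zpow_add₀ hd0.ne']
      congr 1; push_cast; ring
    rw [e]
    exact mul_le_mul hDl (le_max_left _ _) (by positivity) hDpos.le
  have hM2 : a * α ^ (m₁ + 7) ≤ D * M := by
    have e : a * α ^ (m₁ + 7) = D * α ^ ((m₁ : ℤ) - m + 7) := by
      rw [hD, mul_assoc, ← zpow_natCast, ← zpow_natCast, ← zpow_add₀ hα0.ne']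
      congr 2; push_cast; ring
    rw [e]
    exact mul_le_mul_of_nonneg_left (le_max_right _ _) hDpos.le
  have hd4 : 6.5 ≤ d ^ 4 := by
    have : d ^ 4 = 3 * d + 2 := by linear_combination (d ^ 2 + d + 2) * hd
    rw [this]; linarith
  have hα7 : 7 ≤ α ^ 7 := by
    have : α ^ 7 = α * (α + 1) ^ 2 := by rw [← hα]; ring
    rw [this]
    have h1 : (1.32 : ℝ) * (1.32 + 1) ^ 2 ≤ α * (α + 1) ^ 2 := by gcongr
    norm_num at h1 ⊢
    linarith
  have hα1 : 1 ≤ α ^ m₁ := one_le_pow₀ hpos.le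
  have hX : 6.5 * d ^ n₁ ≤ D * M := by
    rw [pow_add] at hM1
    have := mul_le_mul_of_nonneg_left hd4 (pow_pos hd0 n₁).le
    linarith
  have hY : 4.9 * α ^ m₁ ≤ D * M := by
    have : 4.9 * α ^ m₁ ≤ a * α ^ (m₁ + 7) := by
      rw [pow_add]
      have h1 : (0.7 : ℝ) * 7 ≤ a * α ^ 7 :=
        mul_le_mul al.le hα7 (by norm_num) ha0.le
      have h2 := mul_le_mul_of_nonneg_left h1 (zero_le_one.trans hα1)
      norm_num at h2 ⊢
      linarith
    linarith
  have main : |d ^ (j + 3) - D| < D * M := by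
    have hp := pow_pos hd0 n₁
    rw [abs_lt]; constructor <;> linarith
  have hfin : a⁻¹ * d ^ (j + 3) * α ^ (-(m : ℤ)) - 1 = (d ^ (j + 3) - D) / D := by
    rw [zpow_neg, zpow_natCast, hD]
    field_simp
  rw [hfin, abs_div, abs_of_pos hDpos, div_lt_iff₀ hDpos, mul_comm]
  exact main
end
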